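/- There are absolute constants c > 0 and C > 0 such that for every real x ≥ 16 and every real r with r² ≤ 4x one has c · √(4x − r²) / log x ≤ ∫_{max(2, r²/4)}^{x} (1 − r²/(4t))^{−1/2} / (2√t · log t) dt ≤ C · √(4x − r²) / log x. -/

import Mathlib

lemma aux_eq (a t : ℝ) (h2 : 2 < t) (ha : a < t) :
    (1 - a / t) ^ (-(1 : ℝ) / 2) / (2 * Real.sqrt t * Real.log t)
      = (t - a) ^ (-(1 : ℝ) / 2) / (2 * Real.log t) := by
  have ht : 0 < t := by linarith
  have h1 : 1 - a / t = (t - a) / t := by field_simp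
  have hs : t ^ (-(1 : ℝ) / 2) = (Real.sqrt t)⁻¹ := by
    rw [Real.sqrt_eq_rpow, ← Real.rpow_neg ht.le]; norm_num
  have hp : 0 < Real.sqrt t := Real.sqrt_pos.2 ht
  have hl : 0 < Real.log t := Real.log_pos (by linarith)
  rw [h1, Real.div_rpow (by linarith) ht.le, hs]
  field_simp

lemma aux_log (a t x : ℝ) (ha0 : 0 ≤ a) (h2 : 2 < t) (ha : a < t) (hx : t ≤ x) :
    Real.log x ≤ 7 * ((x - a) / (t - a)) ^ ((1 : ℝ) / 4) * Real.log t := by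
  have ht : 0 < t := by linarith
  have hx0 : 0 < x := by linarith
  have hta : 0 < t - a := by linarith
  have hl2 : 0.69 < Real.log 2 := by linarith [Real.log_two_gt_d9]
  have hlt : Real.log 2 ≤ Real.log t := Real.log_le_log (by norm_num) h2.le
  have h1 : x / t ≤ (x - a) / (t - a) := by
    rw [div_le_div_iff₀ ht hta]; nlinarith
  have h11 : 1 ≤ x / t := by rw [le_div_iff₀ ht]; linarith
  set z := (x - a) / (t - a)
  have hz : 1 ≤ z := h11.trans h1
  have h3 : Real.log x - Real.log t = Real.log (x / t) := by
    rw [Real.log_div hx0.ne' ht.ne']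
  have h4 : Real.log (x / t) ≤ Real.log z := Real.log_le_log (by positivity) h1
  have h5 : Real.log z ≤ z ^ ((1 : ℝ) / 4) / (1 / 4) :=
    Real.log_le_rpow_div (by linarith) (by norm_num)
  have h6 : 1 ≤ z ^ ((1 : ℝ) / 4) := Real.one_le_rpow hz (by norm_num)
  set w := z ^ ((1 : ℝ) / 4)
  nlinarith [mul_nonneg (sub_nonneg.2 h6) (show 0 ≤ Real.log t by linarith),
    mul_nonneg (show 0 ≤ w by linarith) (show 0 ≤ Real.log t - 0.69 by linarith)]

lemma aux_int (a A x p : ℝ) (hp : -1 < p) :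
    IntervalIntegrable (fun t => (t - a) ^ p) MeasureTheory.volume A x := by
  have h := (intervalIntegral.intervalIntegrable_rpow' (a := A - a) (b := x - a) hp).comp_sub_right a
  simpa using h

lemma aux_val (a A x p : ℝ) (hp : -1 < p) :
    ∫ t in A..x, (t - a) ^ p = ((x - a) ^ (p + 1) - (A - a) ^ (p + 1)) / (p + 1) := by
  rw [intervalIntegral.integral_comp_sub_right (fun t => t ^ p) a, integral_rpow (Or.inl hp)]

lemma aux_main (a x : ℝ) (ha0 : 0 ≤ a) (hx : 16 ≤ x) (hax : a ≤ x) :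
    (1 / 2) * Real.sqrt (x - a) / Real.log x ≤
      (∫ t in (max 2 a)..x, (1 - a / t) ^ (-(1 : ℝ) / 2) / (2 * Real.sqrt t * Real.log t)) ∧
    (∫ t in (max 2 a)..x, (1 - a / t) ^ (-(1 : ℝ) / 2) / (2 * Real.sqrt t * Real.log t))
      ≤ 14 * Real.sqrt (x - a) / Real.log x := by
  set A := max 2 a with hA
  have hA2 : 2 ≤ A := le_max_left _ _
  have hAa : a ≤ A := le_max_right _ _
  have hAx : A ≤ x := max_le (by linarith) hax
  have hlx : 0 < Real.log x := Real.log_pos (by linarith)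
  have hy : 0 ≤ x - a := by linarith
  set f : ℝ → ℝ := fun t => (1 - a / t) ^ (-(1 : ℝ) / 2) / (2 * Real.sqrt t * Real.log t) with hf
  set g : ℝ → ℝ := fun t => (7 / (2 * Real.log x) * (x - a) ^ ((1 : ℝ) / 4)) * (t - a) ^ (-(3 : ℝ) / 4) with hg
  set l : ℝ → ℝ := fun t => (1 / (2 * Real.log x)) * (t - a) ^ (-(1 : ℝ) / 2) with hl
  have hlf : ∀ t, A < t → t ≤ x → l t ≤ f t := by
    intro t h1 h2
    have hlt : 0 < Real.log t := Real.log_pos (by linarith)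
    have hltx : Real.log t ≤ Real.log x := Real.log_le_log (by linarith) h2
    have hs : 0 ≤ (t - a) ^ (-(1 : ℝ) / 2) := Real.rpow_nonneg (by linarith) _
    simp only [hl, hf]
    rw [aux_eq a t (by linarith) (by linarith), div_mul_eq_mul_div, one_mul]
    gcongr
  have hl0 : ∀ t, A < t → t ≤ x → 0 ≤ l t := by
    intro t h1 h2
    have hs : 0 ≤ (t - a) ^ (-(1 : ℝ) / 2) := Real.rpow_nonneg (by linarith) _
    simp only [hl]; positivity
  have hfg : ∀ t, A < t → t ≤ x → f t ≤ g t := by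
    intro t h1 h2
    have hlt : 0 < Real.log t := Real.log_pos (by linarith)
    have hta : 0 < t - a := by linarith
    have hlog := aux_log a t x ha0 (by linarith) (by linarith) h2
    have e : (t - a) ^ (-(3 : ℝ) / 4) = (t - a) ^ (-(1 : ℝ) / 2) / (t - a) ^ ((1 : ℝ) / 4) := by
      rw [← Real.rpow_sub hta]; norm_num
    rw [Real.div_rpow hy hta.le] at hlog
    simp only [hg, hf]
    rw [aux_eq a t (by linarith) (by linarith), e]
    have hs : 0 < (t - a) ^ (-(1 : ℝ) / 2) := Real.rpow_pos_of_pos hta _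
    have hs' : 0 < (t - a) ^ ((1 : ℝ) / 4) := Real.rpow_pos_of_pos hta _
    generalize (t - a) ^ (-(1 : ℝ) / 2) = S at *
    generalize (t - a) ^ ((1 : ℝ) / 4) = T at *
    generalize (x - a) ^ ((1 : ℝ) / 4) = Y at *
    have : 7 / (2 * Real.log x) * Y * (S / T)
        = (S / (2 * Real.log t)) * ((7 * (Y / T) * Real.log t) / Real.log x) := by
      field_simp
    rw [this]
    apply le_mul_of_one_le_right (by positivity)
    rw [le_div_iff₀ hlx]; linarith
  have hgi : IntervalIntegrable g MeasureTheory.volume A x :=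
    (aux_int a A x _ (by norm_num)).const_mul _
  have hli : IntervalIntegrable l MeasureTheory.volume A x :=
    (aux_int a A x _ (by norm_num)).const_mul _
  have hfi : IntervalIntegrable f MeasureTheory.volume A x := by
    refine hgi.mono_fun (Measurable.aestronglyMeasurable (by simp only [hf]; fun_prop)) ?_
    rw [Set.uIoc_of_le hAx]
    refine (MeasureTheory.ae_restrict_iff' measurableSet_Ioc).2 (Filter.Eventually.of_forall ?_)
    intro t ht
    have h1 := hl0 t ht.1 ht.2
    have h2 := hlf t ht.1 ht.2
    have h3 := hfg t ht.1 ht.2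
    show ‖f t‖ ≤ ‖g t‖
    rw [Real.norm_of_nonneg (by linarith), Real.norm_of_nonneg (by linarith)]
    exact h3
  constructor
  · have hm : ∫ t in A..x, l t ≤ ∫ t in A..x, f t :=
      intervalIntegral.integral_mono_on_of_le_Ioo hAx hli hfi
        (fun t ht => hlf t ht.1 ht.2.le)
    refine le_trans ?_ hm
    simp only [hl]
    rw [intervalIntegral.integral_const_mul, aux_val a A x _ (by norm_num)]
    have e : (-(1 : ℝ) / 2 + 1) = 1 / 2 := by norm_num
    rw [e, ← Real.sqrt_eq_rpow, ← Real.sqrt_eq_rpow]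
    have hk : Real.sqrt (A - a) ≤ 1 / 2 * Real.sqrt (x - a) := by
      rw [Real.sqrt_le_left (by positivity), mul_pow, Real.sq_sqrt hy]
      rcases max_cases 2 a with h | h <;> rw [hA, h.1] <;> linarith
    have : 1 / (2 * Real.log x) * ((Real.sqrt (x - a) - Real.sqrt (A - a)) / (1 / 2))
        = (Real.sqrt (x - a) - Real.sqrt (A - a)) / Real.log x := by field_simp
    rw [this]
    gcongr
    linarith
  · have hm : ∫ t in A..x, f t ≤ ∫ t in A..x, g t :=
      intervalIntegral.integral_mono_on_of_le_Ioo hAx hfi hgi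
        (fun t ht => hfg t ht.1 ht.2.le)
    refine hm.trans ?_
    simp only [hg]
    rw [intervalIntegral.integral_const_mul, aux_val a A x _ (by norm_num)]
    have e : (-(3 : ℝ) / 4 + 1) = 1 / 4 := by norm_num
    have e2 : Real.sqrt (x - a) = (x - a) ^ ((1 : ℝ) / 4) * (x - a) ^ ((1 : ℝ) / 4) := by
      rw [Real.sqrt_eq_rpow, ← Real.rpow_add_of_nonneg hy (by norm_num) (by norm_num)]; norm_num
    rw [e, e2]
    have hY : 0 ≤ (x - a) ^ ((1 : ℝ) / 4) := Real.rpow_nonneg hy _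
    have hZ : 0 ≤ (A - a) ^ ((1 : ℝ) / 4) := Real.rpow_nonneg (by linarith) _
    generalize (x - a) ^ ((1 : ℝ) / 4) = Y at *
    generalize (A - a) ^ ((1 : ℝ) / 4) = Z at *
    have : 7 / (2 * Real.log x) * Y * ((Y - Z) / (1 / 4)) = 14 * (Y * (Y - Z)) / Real.log x := by
      field_simp; ring
    rw [this]
    gcongr
    linarith

/-- There are absolute constants `c, C > 0` such that for all real `x ≥ 16` and real `r` with
`r² ≤ 4x`, `∫_{max(2,r²/4)}^x (1 − r²/(4t))^{−1/2}/(2√t log t) dt` is between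
`c √(4x − r²)/log x` and `C √(4x − r²)/log x`. -/
theorem refined_main_term_order_CM :
    ∃ c C : ℝ, 0 < c ∧ 0 < C ∧ ∀ x : ℝ, 16 ≤ x → ∀ r : ℝ, r ^ 2 ≤ 4 * x →
      c * Real.sqrt (4 * x - r ^ 2) / Real.log x
        ≤ (∫ t in (max 2 (r ^ 2 / 4))..x,
            (1 - r ^ 2 / (4 * t)) ^ (-(1 : ℝ) / 2) / (2 * Real.sqrt t * Real.log t)) ∧
      (∫ t in (max 2 (r ^ 2 / 4))..x,
          (1 - r ^ 2 / (4 * t)) ^ (-(1 : ℝ) / 2) / (2 * Real.sqrt t * Real.log t))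
        ≤ C * Real.sqrt (4 * x - r ^ 2) / Real.log x := by
  refine ⟨1 / 4, 7, by norm_num, by norm_num, ?_⟩
  intro x hx r hr
  have h := aux_main (r ^ 2 / 4) x (by positivity) hx (by linarith)
  have e : Real.sqrt (4 * x - r ^ 2) = 2 * Real.sqrt (x - r ^ 2 / 4) := by
    rw [show 4 * x - r ^ 2 = 2 ^ 2 * (x - r ^ 2 / 4) by ring, Real.sqrt_mul (by norm_num),
      Real.sqrt_sq (by norm_num)]
  simp only [div_div] at h
  rw [e]
  ring_nf at h ⊢
  exact h
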